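/- arXiv:2111.01784 — 12 statements merged into one kernel-verified Lean document; each statement's English description precedes it below -/
import Mathlib

section
/- If a Pinwheel Scheduling instance a with k tasks is schedulable, then its density satisfies d(a) = ∑ i, (1 / (a i) : ℚ) ≤ 1. -/
/-- A schedule `S` is valid for the Pinwheel Scheduling instance `a` if every task `i`
is executed at least once in every window of `a i` consecutive days. -/
def IsValidSchedule {k : ℕ} (a : Fin k → ℕ) (S : ℕ → Option (Fin k)) : Prop :=
  ∀ i : Fin k, ∀ t : ℕ, ∃ t', t ≤ t' ∧ t' < t + a i ∧ S t' = some i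

/-- A Pinwheel Scheduling instance is schedulable if some valid schedule exists. -/
def Schedulable {k : ℕ} (a : Fin k → ℕ) : Prop :=
  ∃ S : ℕ → Option (Fin k), IsValidSchedule a S

/-- The predicate `p` holds somewhere in every window of `a` consecutive natural numbers. This is
the constraint that `IsValidSchedule` imposes on the days given to a single task. -/
def OccursInEveryWindow (p : ℕ → Prop) (a : ℕ) : Prop :=
  ∀ t : ℕ, ∃ t', t ≤ t' ∧ t' < t + a ∧ p t'

namespace OccursInEveryWindow

variable {p : ℕ → Prop} {a : ℕ}

lemma ne_zero (h : OccursInEveryWindow p a) : a ≠ 0 := by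
  obtain ⟨t, -, ht, -⟩ := h 0
  lia

variable [DecidablePred p]

lemma le_count_mul (h : OccursInEveryWindow p a) (m : ℕ) : m ≤ Nat.count p (m * a) := by
  induction m with
  | zero => exact Nat.zero_le _
  | succ m ih =>
    obtain ⟨t, hmt, htm, ht⟩ := h (m * a)
    rw [← Nat.succ_mul] at htm
    exact Nat.succ_le_of_lt <| calc
      m ≤ Nat.count p (m * a) := ih
      _ ≤ Nat.count p t := Nat.count_monotone p hmt
      _ < Nat.count p ((m + 1) * a) := Nat.count_strict_mono ht htm

lemma div_le_count (h : OccursInEveryWindow p a) (n : ℕ) : n / a ≤ Nat.count p n :=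
  (h.le_count_mul (n / a)).trans (Nat.count_monotone p (Nat.div_mul_le_self n a))

end OccursInEveryWindow

lemma sum_count_eq_le {κ : Type*} [DecidableEq κ] (c : ℕ → κ) (s : Finset κ) (n : ℕ) :
    ∑ b ∈ s, Nat.count (fun t ↦ c t = b) n ≤ n := by
  simp only [Nat.count_eq_card_filter_range, Finset.sum_card_fiberwise_eq_card_filter]
  exact (Finset.card_filter_le _ _).trans_eq (Finset.card_range n)

section

variable {ι : Type*}

lemma sum_one_div_eq_sum_div_div {s : Finset ι} {a : ι → ℕ} {N : ℕ} (hN : N ≠ 0)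
    (ha : ∀ i ∈ s, a i ∣ N) : ∑ i ∈ s, (1 / a i : ℚ) = (∑ i ∈ s, N / a i : ℕ) / N := by
  have hN' : (N : ℚ) ≠ 0 := Nat.cast_ne_zero.2 hN
  rw [Nat.cast_sum, Finset.sum_div]
  refine Finset.sum_congr rfl fun i hi ↦ ?_
  rw [Nat.cast_div_charZero (ha i hi), div_right_comm, div_self hN']

/-- Double counting over `N` days, where `N` is a common multiple of the frequencies: task `i` is
executed at least `N / a i` times, and each day serves at most one task. -/
theorem density_le_one_of_schedulable_general (s : Finset ι) (a : ι → ℕ) (S : ℕ → Option ι)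
    (hS : ∀ i ∈ s, OccursInEveryWindow (fun t ↦ S t = some i) (a i)) :
    ∑ i ∈ s, (1 / a i : ℚ) ≤ 1 := by
  classical
  set N := ∏ i ∈ s, a i
  have hN : N ≠ 0 := Finset.prod_ne_zero_iff.2 fun i hi ↦ (hS i hi).ne_zero
  have sum_div_le : ∑ i ∈ s, N / a i ≤ N := calc
    ∑ i ∈ s, N / a i ≤ ∑ i ∈ s, Nat.count (fun t ↦ S t = some i) N :=
      Finset.sum_le_sum fun i hi ↦ (hS i hi).div_le_count N
    _ = ∑ o ∈ s.map .some, Nat.count (fun t ↦ S t = o) N := by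
      simp only [Finset.sum_map, Function.Embedding.some_apply]
    _ ≤ N := sum_count_eq_le S _ N
  rw [sum_one_div_eq_sum_div_div hN fun i hi ↦ Finset.dvd_prod_of_mem a hi]
  exact div_le_one_of_le₀ (Nat.cast_le.2 sum_div_le) N.cast_nonneg

end

theorem density_le_one_of_schedulable {k : ℕ} (a : Fin k → ℕ)
    (h : Schedulable a) : ∑ i, (1 / (a i) : ℚ) ≤ 1 :=
  let ⟨S, hS⟩ := h
  density_le_one_of_schedulable_general Finset.univ a S fun i _ ↦ hS i
end

section
/- Every Pinwheel Scheduling instance a with k tasks such that a i ≥ 1 for all i and density d(a) = ∑ i, (1 / (a i) : ℚ) ≤ 1/2 is schedulable. -/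
/-!
Rounding every frequency down to a power of two at most doubles the density, so it stays at most
one, and powers of two form a chain under divisibility. For such a chain the tasks are placed
greedily in order of increasing frequency: the residue classes already occupied have total density
less than one, so they miss some day `x`, and since their moduli divide the new frequency `n`, they
miss the whole residue class of `x` modulo `n`.
-/

/-- The residue class of `r` modulo `n` in `ℕ`: the days given to a task that is executed
every `n` days. The offset `r` need not be reduced, so the least element is `r % n`. -/
def residueClass (n r : ℕ) : Set ℕ := {t | t ≡ r [MOD n]}

theorem exists_mem_residueClass_Ico {n : ℕ} (hn : 0 < n) (r t : ℕ) :
    ∃ t' ∈ Finset.Ico t (t + n), t' ∈ residueClass n r := by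
  have hr : r % n ∈ (Finset.Ico t (t + n)).image (· % n) := by
    rw [Nat.image_Ico_mod]
    exact Finset.mem_range.mpr (Nat.mod_lt r hn)
  exact Finset.mem_image.mp hr

theorem disjoint_residueClass_of_dvd {m n r x : ℕ} (hmn : m ∣ n) (hx : x ∉ residueClass m r) :
    Disjoint (residueClass n x) (residueClass m r) :=
  Set.disjoint_left.mpr fun _ htx htr ↦ hx ((htx.of_dvd hmn).symm.trans htr)

theorem count_modEq_of_dvd {n N : ℕ} (hn : 0 < n) (hnN : n ∣ N) (r : ℕ) :
    N.count (· ≡ r [MOD n]) = N / n := by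
  simp [Nat.count_modEq_card N hn, Nat.mod_eq_zero_of_dvd hnN]

theorem exists_forall_notMem_residueClass {ι : Type*} {s : Finset ι} {n : ι → ℕ}
    (hn : ∀ i ∈ s, 0 < n i) (hsum : ∑ i ∈ s, (1 / n i : ℚ) < 1) (r : ι → ℕ) :
    ∃ x, ∀ i ∈ s, x ∉ residueClass (n i) (r i) := by
  classical
  by_contra! hcover
  let N := ∏ i ∈ s, n i
  have hN : 0 < N := Finset.prod_pos hn
  have hdvd : ∀ i ∈ s, n i ∣ N := fun i hi ↦ Finset.dvd_prod_of_mem n hi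
  have hsubset : Finset.range N ⊆ s.biUnion fun i ↦ {x ∈ Finset.range N | x ≡ r i [MOD n i]} := by
    intro x hx
    obtain ⟨i, hi, hxi⟩ := hcover x
    exact Finset.mem_biUnion.mpr ⟨i, hi, Finset.mem_filter.mpr ⟨hx, hxi⟩⟩
  have hle : N ≤ ∑ i ∈ s, N / n i := calc
    N = (Finset.range N).card := (Finset.card_range N).symm
    _ ≤ ∑ i ∈ s, {x ∈ Finset.range N | x ≡ r i [MOD n i]}.card :=
      (Finset.card_le_card hsubset).trans Finset.card_biUnion_le
    _ = ∑ i ∈ s, N / n i := Finset.sum_congr rfl fun i hi ↦ by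
      rw [← Nat.count_eq_card_filter_range, count_modEq_of_dvd (hn i hi) (hdvd i hi)]
  have hlt : (∑ i ∈ s, N / n i : ℕ) < (N : ℚ) := calc
    ((∑ i ∈ s, N / n i : ℕ) : ℚ) ≤ ∑ i ∈ s, (N : ℚ) / n i := by
      push_cast
      exact Finset.sum_le_sum fun _ _ ↦ Nat.cast_div_le
    _ = N * ∑ i ∈ s, (1 / n i : ℚ) := by simp only [Finset.mul_sum, mul_one_div]
    _ < N := mul_lt_of_lt_one_right (by exact_mod_cast hN) hsum
  exact hle.not_gt (by exact_mod_cast hlt)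

theorem exists_pairwiseDisjoint_residueClass {ι : Type*} {s : Finset ι} {n : ι → ℕ}
    (hn : ∀ i ∈ s, 0 < n i) (hchain : IsChain (· ∣ ·) (n '' s))
    (hsum : ∑ i ∈ s, (1 / n i : ℚ) ≤ 1) :
    ∃ r : ι → ℕ, (s : Set ι).PairwiseDisjoint fun i ↦ residueClass (n i) (r i) := by
  classical
  induction s using Finset.induction_on_max_value n with
  | empty => exact ⟨0, by simp⟩
  | insert a s has hmax ih =>
    rw [Finset.sum_insert has] at hsum
    rw [Finset.forall_mem_insert] at hn
    have hsum_lt : ∑ i ∈ s, (1 / n i : ℚ) < 1 := by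
      have : (0 : ℚ) < 1 / n a := one_div_pos.mpr (by exact_mod_cast hn.1)
      linarith
    have hdvd : ∀ i ∈ s, n i ∣ n a := fun i hi ↦ by
      have hi' : n i ∈ n '' ↑(insert a s) := Set.mem_image_of_mem n (Finset.mem_insert_of_mem hi)
      have ha' : n a ∈ n '' ↑(insert a s) := Set.mem_image_of_mem n (Finset.mem_insert_self a s)
      refine (hchain.total hi' ha').elim id fun hai ↦ ?_
      exact ((hmax i hi).antisymm (Nat.le_of_dvd (hn.2 i hi) hai)).dvd
    obtain ⟨r, hr⟩ := ih hn.2 (hchain.mono (Set.image_mono (by simp))) hsum_lt.le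
    obtain ⟨x, hx⟩ := exists_forall_notMem_residueClass hn.2 hsum_lt r
    have hupdate : ∀ i ∈ s, Function.update r a x i = r i := fun i hi ↦
      Function.update_of_ne (ne_of_mem_of_not_mem hi has) x r
    refine ⟨Function.update r a x, ?_⟩
    rw [Finset.coe_insert, Set.pairwiseDisjoint_insert_of_notMem (by simpa using has)]
    constructor
    · intro i hi j hj hij
      simpa only [Function.onFun, hupdate i hi, hupdate j hj] using hr hi hj hij
    · intro i hi
      rw [Function.update_self, hupdate i hi]
      exact disjoint_residueClass_of_dvd (hdvd i hi) (hx i hi)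

theorem Schedulable.mono {k : ℕ} {a b : Fin k → ℕ} (hab : a ≤ b) (ha : Schedulable a) :
    Schedulable b := by
  obtain ⟨S, hS⟩ := ha
  refine ⟨S, fun i t ↦ ?_⟩
  obtain ⟨t', hle, hlt, hSt'⟩ := hS i t
  exact ⟨t', hle, hlt.trans_le (Nat.add_le_add_left (hab i) t), hSt'⟩

theorem schedulable_of_pairwise_disjoint {k : ℕ} {a : Fin k → ℕ} {T : Fin k → Set ℕ}
    (hdisj : Pairwise (Function.onFun Disjoint T))
    (hT : ∀ i t, ∃ t' ∈ Finset.Ico t (t + a i), t' ∈ T i) : Schedulable a := by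
  classical
  refine ⟨fun t ↦ if h : ∃ i, t ∈ T i then some h.choose else none, fun i t ↦ ?_⟩
  obtain ⟨t', hwindow, ht'⟩ := hT i t
  obtain ⟨hle, hlt⟩ := Finset.mem_Ico.mp hwindow
  have hex : ∃ j, t' ∈ T j := ⟨i, ht'⟩
  have hchoose : hex.choose = i :=
    hdisj.eq (Set.not_disjoint_iff.mpr ⟨t', hex.choose_spec, ht'⟩)
  exact ⟨t', hle, hlt, (dif_pos hex).trans (congrArg some hchoose)⟩

theorem schedulable_of_isChain_dvd {k : ℕ} {a : Fin k → ℕ} (ha : ∀ i, 0 < a i)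
    (hchain : IsChain (· ∣ ·) (Set.range a)) (hd : ∑ i, (1 / a i : ℚ) ≤ 1) :
    Schedulable a := by
  obtain ⟨r, hr⟩ := exists_pairwiseDisjoint_residueClass (s := Finset.univ) (fun i _ ↦ ha i)
    (by simpa using hchain) hd
  rw [Finset.coe_univ, Set.PairwiseDisjoint, Set.pairwise_univ] at hr
  exact schedulable_of_pairwise_disjoint hr fun i ↦ exists_mem_residueClass_Ico (ha i) (r i)

theorem isChain_dvd_range_pow (b : ℕ) : IsChain (· ∣ ·) (Set.range (b ^ ·)) := by
  rintro _ ⟨m, rfl⟩ _ ⟨n, rfl⟩ -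
  exact (le_total m n).imp (pow_dvd_pow b) (pow_dvd_pow b)

theorem one_div_pow_log_le {b n : ℕ} (hb : 1 < b) (hn : 0 < n) :
    (1 / (b ^ Nat.log b n : ℕ) : ℚ) ≤ b * (1 / n) := by
  have hlt : (n : ℚ) < (b ^ Nat.log b n : ℕ) * b := by
    exact_mod_cast pow_succ b _ ▸ Nat.lt_pow_succ_log_self hb n
  have hpow : (0 : ℚ) < (b ^ Nat.log b n : ℕ) := by positivity
  rw [mul_one_div, div_le_div_iff₀ hpow (by exact_mod_cast hn)]
  linarith

theorem schedulable_of_density_le_half {k : ℕ} (a : Fin k → ℕ)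
    (ha : ∀ i, 1 ≤ a i) (hd : ∑ i, (1 / (a i) : ℚ) ≤ 1 / 2) :
    Schedulable a := by
  let p : Fin k → ℕ := fun i ↦ 2 ^ Nat.log 2 (a i)
  have hp_le : p ≤ a := fun i ↦ Nat.pow_log_le_self 2 (Nat.one_le_iff_ne_zero.mp (ha i))
  have hp_chain : IsChain (· ∣ ·) (Set.range p) :=
    (isChain_dvd_range_pow 2).mono (Set.range_comp_subset_range (fun i ↦ Nat.log 2 (a i)) (2 ^ ·))
  have hp_sum : ∑ i, (1 / p i : ℚ) ≤ 1 := calc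
    ∑ i, (1 / p i : ℚ) ≤ ∑ i, 2 * (1 / a i : ℚ) :=
      Finset.sum_le_sum fun i _ ↦ one_div_pow_log_le one_lt_two (ha i)
    _ = 2 * ∑ i, (1 / a i : ℚ) := (Finset.mul_sum ..).symm
    _ ≤ 1 := by linarith
  exact (schedulable_of_isChain_dvd (fun i ↦ by positivity) hp_chain hp_sum).mono hp_le
end

section
/- For every natural number M ≥ 1, the Pinwheel Scheduling instance with 3 tasks of frequencies 2, 3 and M is not schedulable. -/
namespace IsValidSchedule

variable {k : ℕ} {a : Fin k → ℕ} {S : ℕ → Option (Fin k)}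

theorem exists_lt_add_eq_some (hS : IsValidSchedule a S) {i : Fin k} {n : ℕ} (hi : a i ≤ n)
    (t : ℕ) : ∃ r < n, S (t + r) = some i := by
  obtain ⟨t', ht, htn, h⟩ := hS i t
  obtain ⟨r, rfl⟩ := Nat.exists_eq_add_of_le ht
  exact ⟨r, by lia, h⟩

theorem eq_some_or_succ_eq_some (hS : IsValidSchedule a S) {i : Fin k} (hi : a i ≤ 2) (t : ℕ) :
    S t = some i ∨ S (t + 1) = some i := by
  obtain ⟨r, hr, h⟩ := hS.exists_lt_add_eq_some hi t
  interval_cases r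
  · exact .inl h
  · exact .inr h

-- If task `i` misses day `t + 1`, it occupies days `t` and `t + 2`, so within these three days
-- task `j` can only be executed on day `t + 1`.
theorem succ_eq_some_or_eq_some (hS : IsValidSchedule a S) {i j : Fin k} (hij : i ≠ j)
    (hi : a i ≤ 2) (hj : a j ≤ 3) (t : ℕ) : S (t + 1) = some i ∨ S (t + 1) = some j := by
  refine or_iff_not_imp_left.2 fun hmiss ↦ ?_
  have before : S t = some i := (hS.eq_some_or_succ_eq_some hi t).resolve_right hmiss
  have after : S (t + 2) = some i := (hS.eq_some_or_succ_eq_some hi (t + 1)).resolve_left hmiss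
  obtain ⟨r, hr, h⟩ := hS.exists_lt_add_eq_some hj t
  interval_cases r
  · exact absurd (Option.some_injective _ (before.symm.trans h)) hij
  · exact h
  · exact absurd (Option.some_injective _ (after.symm.trans h)) hij

end IsValidSchedule

theorem not_schedulable_two_three_M_general {k : ℕ} {a : Fin k → ℕ} {i j l : Fin k}
    (hij : i ≠ j) (hil : i ≠ l) (hjl : j ≠ l) (hi : a i ≤ 2) (hj : a j ≤ 3) :
    ¬ Schedulable a := by
  rintro ⟨S, hS⟩
  -- Day `0` has no predecessor to force task `i` onto, so it could be used for task `l`.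
  obtain ⟨r, -, hl⟩ := hS.exists_lt_add_eq_some (le_refl (a l)) 1
  rw [Nat.add_comm] at hl
  rcases hS.succ_eq_some_or_eq_some hij hi hj r with h | h
  · exact hil (Option.some_injective _ (h.symm.trans hl))
  · exact hjl (Option.some_injective _ (h.symm.trans hl))

theorem not_schedulable_two_three_M (M : ℕ) (hM : 1 ≤ M) :
    ¬ Schedulable ![2, 3, M] :=
  not_schedulable_two_three_M_general (i := 0) (j := 1) (l := 2)
    (by decide) (by decide) (by decide) le_rfl le_rfl
end

section
/- If a Pinwheel Scheduling instance a with k tasks is schedulable, then there exist a period p with 1 ≤ p ≤ ∏ i, a i and a valid schedule S for a that is periodic with period p, i.e. S (t + p) = S t for all t ∈ ℕ. -/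
/-!
Fix a valid schedule and record, on each day, how many days every task still has to wait. These
waiting times form a vector with `i`-th entry less than `a i`, so among the first `∏ i, a i + 1`
days two carry the same vector. Repeating the block of days between them forever is again valid:
what makes numbers count as waiting times only concerns pairs of consecutive days, and the vector
at the start of the block is the one that originally followed its last day.
-/

/-- The pinwheel condition of frequency `a` on a property of days: it holds at least once in every
window of `a` consecutive days. This is what validity of a schedule demands of each task. -/
def OccursEvery (a : ℕ) (P : ℕ → Prop) : Prop :=
  ∀ t, ∃ t', t ≤ t' ∧ t' < t + a ∧ P t'

/-- A deadline certificate for `P`: the value on day `t` is a promise that `P` occurs within that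
many days. Unlike exact waiting times, the value may be nonzero on a day when `P` holds and may
drop by more than one, neither of which breaks the promise. -/
structure IsCountdown (P : ℕ → Prop) (c : ℕ → ℕ) : Prop where
  holds_of_eq_zero : ∀ t, c t = 0 → P t
  succ_lt_self : ∀ t, c t ≠ 0 → c (t + 1) < c t

/-- The number of days from day `t` to the next occurrence of `P`, with `0` meaning that `P` holds
on day `t` itself. If `P` never occurs again, the junk value is also `0`. -/
noncomputable def waitingTime (P : ℕ → Prop) (t : ℕ) : ℕ :=
  sInf {d | P (t + d)}

/-- The sequence repeating the block `f s, …, f (s + p - 1)` forever, used to make schedules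
periodic. For `p = 0` it is the tail of `f` from `s` on. -/
def loop {α : Type*} (f : ℕ → α) (s p : ℕ) : ℕ → α :=
  fun t ↦ f (s + t % p)

section Loop

variable {α : Type*} (f : ℕ → α) (s p : ℕ)

theorem loop_periodic : Function.Periodic (loop f s p) p := by
  intro t
  simp only [loop, Nat.add_mod_right]

variable {f s p}

theorem loop_succ (hf : f (s + p) = f s) (t : ℕ) :
    loop f s p (t + 1) = f (s + t % p + 1) := by
  rw [loop, ← Nat.mod_add_mod, Nat.add_assoc]
  rcases p.eq_zero_or_pos with rfl | hp
  · rw [Nat.mod_zero]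
  · have hle : t % p + 1 ≤ p := Nat.mod_lt t hp
    rcases hle.lt_or_eq with hlt | hend
    · rw [Nat.mod_eq_of_lt hlt]
    · rw [hend, Nat.mod_self, Nat.add_zero, hf]

end Loop

section Countdown

variable {P : ℕ → Prop} {c : ℕ → ℕ}

theorem IsCountdown.exists_le_add (hc : IsCountdown P c) (t : ℕ) :
    ∃ t', t ≤ t' ∧ t' ≤ t + c t ∧ P t' := by
  induction hn : c t using Nat.strong_induction_on generalizing t with
  | _ n ih =>
    subst hn
    by_cases h0 : c t = 0
    · exact ⟨t, le_rfl, Nat.le_add_right _ _, hc.holds_of_eq_zero t h0⟩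
    · have hlt := hc.succ_lt_self t h0
      obtain ⟨t', hle, hle', hP⟩ := ih _ hlt (t + 1) rfl
      exact ⟨t', by omega, by omega, hP⟩

theorem IsCountdown.occursEvery (hc : IsCountdown P c) {a : ℕ} (ha : ∀ t, c t < a) :
    OccursEvery a P := by
  intro t
  obtain ⟨t', hle, hle', hP⟩ := hc.exists_le_add t
  exact ⟨t', hle, hle'.trans_lt (Nat.add_lt_add_left (ha t) t), hP⟩

theorem IsCountdown.loop (hc : IsCountdown P c) {s p : ℕ} (hsp : c (s + p) = c s) :
    IsCountdown (loop P s p) (loop c s p) where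
  holds_of_eq_zero t := hc.holds_of_eq_zero (s + t % p)
  succ_lt_self t ht := by
    rw [loop_succ hsp]
    exact hc.succ_lt_self (s + t % p) ht

end Countdown

section WaitingTime

variable {P : ℕ → Prop} {t : ℕ}

theorem waitingTime_le {d : ℕ} (hd : P (t + d)) : waitingTime P t ≤ d :=
  Nat.sInf_le hd

theorem holds_add_waitingTime (h : ∃ d, P (t + d)) : P (t + waitingTime P t) :=
  Nat.sInf_mem (s := {d | P (t + d)}) h

theorem isCountdown_waitingTime_of_exists (h : ∀ t, ∃ d, P (t + d)) :
    IsCountdown P (waitingTime P) where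
  holds_of_eq_zero t ht := by
    have hP := holds_add_waitingTime (h t)
    rwa [ht, Nat.add_zero] at hP
  succ_lt_self t ht := by
    obtain ⟨d, hd⟩ := Nat.exists_eq_add_one_of_ne_zero ht
    have hP : P (t + 1 + d) := by
      rw [Nat.add_right_comm, Nat.add_assoc, ← hd]
      exact holds_add_waitingTime (h t)
    rw [hd]
    exact Nat.lt_succ_of_le (waitingTime_le hP)

theorem OccursEvery.exists_lt {a : ℕ} (h : OccursEvery a P) (t : ℕ) : ∃ d < a, P (t + d) := by
  obtain ⟨t', hle, hlt, hP⟩ := h t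
  obtain ⟨d, rfl⟩ := Nat.exists_eq_add_of_le hle
  exact ⟨d, Nat.lt_of_add_lt_add_left hlt, hP⟩

theorem OccursEvery.isCountdown_waitingTime {a : ℕ} (h : OccursEvery a P) :
    IsCountdown P (waitingTime P) :=
  isCountdown_waitingTime_of_exists fun t ↦ (h.exists_lt t).imp fun _ hd ↦ hd.2

theorem OccursEvery.waitingTime_lt {a : ℕ} (h : OccursEvery a P) (t : ℕ) :
    waitingTime P t < a := by
  obtain ⟨d, hlt, hP⟩ := h.exists_lt t
  exact (waitingTime_le hP).trans_lt hlt

end WaitingTime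

theorem exists_apply_add_eq_of_fintype {α : Type*} [Fintype α] (f : ℕ → α) :
    ∃ s p, 1 ≤ p ∧ p ≤ Fintype.card α ∧ f (s + p) = f s := by
  obtain ⟨x, y, hne, hxy⟩ := Fintype.exists_ne_map_eq_of_card_lt
    (fun t : Fin (Fintype.card α + 1) ↦ f t) (by rw [Fintype.card_fin]; exact Nat.lt_succ_self _)
  wlog hlt : x < y generalizing x y
  · exact this y x hne.symm hxy.symm (hne.lt_or_gt.resolve_left hlt)
  refine ⟨x, y - x, by omega, by omega, ?_⟩
  rw [Nat.add_sub_cancel' (Fin.le_def.mp hlt.le)]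
  exact hxy.symm

theorem exists_forall_apply_add_eq_of_forall_lt {ι : Type*} [Fintype ι] {a : ι → ℕ}
    {c : ι → ℕ → ℕ} (hc : ∀ i t, c i t < a i) :
    ∃ s p, 1 ≤ p ∧ p ≤ ∏ i, a i ∧ ∀ i, c i (s + p) = c i s := by
  classical
  let vector (t : ℕ) (i : ι) : Fin (a i) := ⟨c i t, hc i t⟩
  obtain ⟨s, p, hp, hle, heq⟩ := exists_apply_add_eq_of_fintype vector
  simp only [Fintype.card_pi, Fintype.card_fin] at hle
  exact ⟨s, p, hp, hle, fun i ↦ congrArg Fin.val (congrFun heq i)⟩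

/-- `R i b` says that action `b` serves task `i`; one action may serve several tasks at once. -/
theorem exists_periodic_schedule_of_schedulable_general {ι β : Type*} [Fintype ι] (a : ι → ℕ)
    (R : ι → β → Prop) (h : ∃ S : ℕ → β, ∀ i, OccursEvery (a i) fun t ↦ R i (S t)) :
    ∃ (p : ℕ) (S : ℕ → β), 1 ≤ p ∧ p ≤ ∏ i, a i ∧
      (∀ i, OccursEvery (a i) fun t ↦ R i (S t)) ∧ ∀ t, S (t + p) = S t := by
  obtain ⟨S, hS⟩ := h
  have hlt (i : ι) (t : ℕ) : waitingTime (fun t ↦ R i (S t)) t < a i := (hS i).waitingTime_lt t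
  obtain ⟨s, p, hp, hle, heq⟩ := exists_forall_apply_add_eq_of_forall_lt hlt
  refine ⟨p, loop S s p, hp, hle, fun i ↦ ?_, loop_periodic S s p⟩
  have hcountdown := (hS i).isCountdown_waitingTime.loop (heq i)
  exact hcountdown.occursEvery fun t ↦ hlt i (s + t % p)

theorem exists_periodic_schedule_of_schedulable {k : ℕ} (a : Fin k → ℕ)
    (h : Schedulable a) :
    ∃ (p : ℕ) (S : ℕ → Option (Fin k)), 1 ≤ p ∧ p ≤ ∏ i, a i ∧
      IsValidSchedule a S ∧ ∀ t, S (t + p) = S t :=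
  exists_periodic_schedule_of_schedulable_general a (fun i b ↦ b = some i) h
end

section
/- For every x : Fin k → ℕ and every list r of tasks (entries in Fin k), the state obtained by executing r twice from x dominates componentwise the state obtained by executing r once from x: for every i, exec (exec x r) r i ≥ exec x r i. Moreover, if r is nonempty, then equality holds in component i if and only if i occurs in r. -/
/-- Executing task `j` in state `x`: task `j` is reset to `0`, all other counters grow. -/
def step {k : ℕ} (x : Fin k → ℕ) (j : Fin k) : Fin k → ℕ :=
  fun i => if i = j then 0 else x i + 1

/-- Executing a list of tasks in order. -/
def exec {k : ℕ} (x : Fin k → ℕ) (r : List (Fin k)) : Fin k → ℕ :=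
  List.foldl step x r

/-!
If `i` occurs in `r`, it is last reset at its last occurrence in `r`, so its final counter is the
number of entries of `r` after that occurrence, whatever the initial state. If `i` does not occur in
`r`, its counter grows by `r.length`. A second execution of `r` therefore leaves the counters of the
tasks in `r` unchanged and adds `r.length` to all others.
-/

section

variable {k : ℕ} (x : Fin k → ℕ) (r : List (Fin k)) (i : Fin k)

theorem exec_append_singleton (j : Fin k) : exec x (r ++ [j]) = step (exec x r) j :=
  List.foldl_concat ..

variable {r i}

theorem exec_apply_of_mem (hi : i ∈ r) : exec x r i = r.reverse.idxOf i := by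
  induction r using List.reverseRecOn with
  | nil => simp at hi
  | append_singleton r j ih =>
    rw [exec_append_singleton, List.reverse_concat]
    obtain rfl | hij := eq_or_ne i j
    · rw [step, if_pos rfl, List.idxOf_cons_self]
    · have hir : i ∈ r := by simpa [hij] using hi
      rw [step, if_neg hij, List.idxOf_cons_ne _ hij.symm, ih hir]

theorem exec_apply_of_notMem (hi : i ∉ r) : exec x r i = x i + r.length := by
  induction r using List.reverseRecOn with
  | nil => rfl
  | append_singleton r j ih =>
    obtain ⟨hir, hij⟩ : i ∉ r ∧ i ≠ j := by simpa using hi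
    rw [exec_append_singleton, step, if_neg hij, ih hir, List.length_append, List.length_singleton,
      Nat.add_assoc]

variable (r i)

theorem exec_exec_self_apply :
    exec (exec x r) r i = exec x r i + if i ∈ r then 0 else r.length := by
  split_ifs with hi
  · rw [exec_apply_of_mem _ hi, exec_apply_of_mem _ hi, Nat.add_zero]
  · exact exec_apply_of_notMem _ hi

end

theorem exec_repeat_worse {k : ℕ} (x : Fin k → ℕ) (r : List (Fin k)) :
    (∀ i, exec x r i ≤ exec (exec x r) r i) ∧
    (r ≠ [] → ∀ i, (exec (exec x r) r i = exec x r i ↔ i ∈ r)) := by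
  refine ⟨fun i => ?_, fun hr i => ?_⟩
  · rw [exec_exec_self_apply]
    exact Nat.le_add_right ..
  · rw [exec_exec_self_apply, Nat.add_eq_left, ite_eq_left_iff]
    simp [hr]
end

section
/- Let a be a Pinwheel Scheduling instance with k tasks and x a state for a such that some schedule is valid from state x for a. Then for every m : ℕ, the number of tasks i with a i - x i ≤ m is at most m. (Equivalently, listing the urgencies u i = a i - x i - 1 in nondecreasing order, the j-th smallest urgency, 0-indexed, is at least j.) -/
/-- A schedule `S` is valid from state `x` for the instance `a` if every task `i` is
executed within its remaining deadline `a i - x i`, and `S` is a valid schedule. -/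
def IsValidFrom {k : ℕ} (a : Fin k → ℕ) (x : Fin k → ℕ) (S : ℕ → Option (Fin k)) : Prop :=
  (∀ i : Fin k, ∃ t, t < a i - x i ∧ S t = some i) ∧ IsValidSchedule a S

theorem encard_setOf_exists_eq_some_le {α β : Type*} (f : α → Option β) (s : Set α) :
    {b | ∃ a ∈ s, f a = some b}.encard ≤ s.encard :=
  calc {b | ∃ a ∈ s, f a = some b}.encard
      = (some '' {b | ∃ a ∈ s, f a = some b}).encard :=
        ((Option.some_injective β).encard_image _).symm
    _ ≤ (f '' s).encard := Set.encard_le_encard (Set.image_subset_iff.2 fun _ hb => hb)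
    _ ≤ s.encard := Set.encard_image_le f s

theorem urgency_bound_general {ι : Type*} (deadline : ι → ℕ) (S : ℕ → Option ι)
    (hS : ∀ i, ∃ t, t < deadline i ∧ S t = some i) (m : ℕ) :
    {i | deadline i ≤ m}.encard ≤ m := by
  have due_subset_executed :
      {i | deadline i ≤ m} ⊆ {i | ∃ t ∈ Set.Iio m, S t = some i} := fun i hi =>
    let ⟨t, ht, hSt⟩ := hS i
    ⟨t, ht.trans_le hi, hSt⟩
  calc {i | deadline i ≤ m}.encard
      ≤ {i | ∃ t ∈ Set.Iio m, S t = some i}.encard := Set.encard_le_encard due_subset_executed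
    _ ≤ (Set.Iio m).encard := encard_setOf_exists_eq_some_le S (Set.Iio m)
    _ = m := by rw [← Finset.coe_Iio, Set.encard_coe_eq_coe_finsetCard, Nat.card_Iio]

theorem urgency_bound {k : ℕ} (a x : Fin k → ℕ) (hx : ∀ i, x i < a i)
    (h : ∃ S : ℕ → Option (Fin k), IsValidFrom a x S) :
    ∀ m : ℕ, (Finset.univ.filter fun i : Fin k => a i - x i ≤ m).card ≤ m := by
  obtain ⟨S, hS, -⟩ := h
  intro m
  rw [← Nat.cast_le (α := ℕ∞), ← Set.encard_coe_eq_coe_finsetCard, Finset.coe_filter_univ]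
  exact urgency_bound_general (fun i => a i - x i) S hS m
end

section
/- Let a be a Pinwheel Scheduling instance with k tasks, x a state for a, S a schedule valid from state x for a, and m : ℕ such that the set T = {i | a i - x i ≤ m} has exactly m elements. Then every task of T is executed within the first m days: for every i ∈ T there exists t < m with S t = some i; consequently, for every day t < m there is some i ∈ T with S t = some i. -/
theorem mapsTo_of_surjOn_of_card_le {α β : Type*} {f : α → β} {s : Finset α} {t : Finset β}
    (hf : Set.SurjOn f s t) (hcard : s.card ≤ t.card) : Set.MapsTo f s t := by
  classical
  have subset_image : t ⊆ s.image f := by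
    rwa [← Finset.coe_subset, Finset.coe_image]
  have image_eq : t = s.image f :=
    Finset.eq_of_subset_of_card_le subset_image (Finset.card_image_le.trans hcard)
  exact fun x hx ↦ image_eq ▸ Finset.mem_image_of_mem f hx

theorem forcing_general {ι : Type*} {S : ℕ → Option ι} {deadline : ι → ℕ} {m : ℕ}
    {T : Finset ι} (hS : ∀ i ∈ T, ∃ t < deadline i, S t = some i)
    (hdeadline : ∀ i ∈ T, deadline i ≤ m) (hcard : m ≤ T.card) :
    (∀ i ∈ T, ∃ t < m, S t = some i) ∧ (∀ t < m, ∃ i ∈ T, S t = some i) := by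
  have executed : ∀ i ∈ T, ∃ t < m, S t = some i := fun i hi ↦
    let ⟨t, ht, hSt⟩ := hS i hi
    ⟨t, ht.trans_le (hdeadline i hi), hSt⟩
  have surjOn : Set.SurjOn S (Finset.range m) (T.map .some) := by
    simpa [Set.SurjOn, Set.subset_def] using executed
  have mapsTo : Set.MapsTo S (Finset.range m) (T.map .some) :=
    mapsTo_of_surjOn_of_card_le surjOn (by simpa using hcard)
  exact ⟨executed, fun t ht ↦ by simpa [eq_comm] using mapsTo (by simpa using ht)⟩

theorem forcing {k : ℕ} (a x : Fin k → ℕ) (hx : ∀ i, x i < a i)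
    (S : ℕ → Option (Fin k)) (hS : IsValidFrom a x S) (m : ℕ)
    (T : Finset (Fin k)) (hT : T = Finset.univ.filter fun i : Fin k => a i - x i ≤ m)
    (hcard : T.card = m) :
    (∀ i ∈ T, ∃ t < m, S t = some i) ∧
    (∀ t < m, ∃ i ∈ T, S t = some i) :=
  forcing_general (fun i _ ↦ hS.1 i) (by simp [hT]) hcard.ge
end

section
/- Let F be an inclusion-minimal set of schedulable Pinwheel Scheduling instances with k tasks that solves the schedulable k-task instances. Then an instance a belongs to F if and only if a is schedulable and, for every task i, the instance obtained from a by replacing a i with a i - 1 is not schedulable. Consequently, the inclusion-minimal solving set is unique. -/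
/-- `F` solves the schedulable `k`-task instances: all members of `F` are schedulable
and every schedulable instance is dominated by some member of `F`. -/
def Solves {k : ℕ} (F : Set (Fin k → ℕ)) : Prop :=
  (∀ a ∈ F, Schedulable a) ∧
  (∀ b : Fin k → ℕ, Schedulable b → ∃ a ∈ F, ∀ i, a i ≤ b i)

/-- `F` is an inclusion-minimal solving set: it solves, and no proper subset does. -/
def MinimalSolves {k : ℕ} (F : Set (Fin k → ℕ)) : Prop :=
  Solves F ∧ ∀ G ⊂ F, ¬ Solves G

/-!
In any partial order, an inclusion-minimal coinitial subset `t` of a set `s` consists of exactly the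
minimal elements of `s`: a minimal element of `s` can only be dominated by itself, while a
non-minimal element of `t` lies strictly above another element of `t`, so it can be discarded. The
schedulable instances form an upper set of `Fin k → ℕ`, so minimality among them can be tested by
decreasing one frequency by `1`; such a decrease is strict despite truncated subtraction because
schedulable frequencies are positive.
-/

section IsCoinitialFor

variable {α : Type*} {s t : Set α}

lemma isCoinitialFor_sdiff_singleton_of_lt [Preorder α] {a c : α} (ht : IsCoinitialFor s t)
    (hc : c ∈ t) (hca : c < a) : IsCoinitialFor s (t \ {a}) := by
  intro b hb
  obtain ⟨d, hd, hdb⟩ := ht hb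
  obtain rfl | hda := eq_or_ne d a
  · exact ⟨c, ⟨hc, hca.ne⟩, hca.le.trans hdb⟩
  · exact ⟨d, ⟨hd, hda⟩, hdb⟩

lemma mem_iff_minimal_mem_of_minimal_isCoinitialFor [PartialOrder α]
    (ht : Minimal (fun u ↦ u ⊆ s ∧ IsCoinitialFor s u) t) {a : α} :
    a ∈ t ↔ Minimal (· ∈ s) a := by
  obtain ⟨hts, hst⟩ := ht.prop
  constructor
  · intro ha
    refine minimal_iff_forall_lt.2 ⟨hts ha, fun b hba hb ↦ ?_⟩
    obtain ⟨c, hc, hcb⟩ := hst hb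
    have hsdiff : t \ {a} ⊆ s ∧ IsCoinitialFor s (t \ {a}) :=
      ⟨Set.sdiff_subset.trans hts, isCoinitialFor_sdiff_singleton_of_lt hst hc (hcb.trans_lt hba)⟩
    exact ht.notMem_of_prop_sdiff_singleton hsdiff ha
  · intro ha
    obtain ⟨c, hc, hca⟩ := hst ha.prop
    exact ha.eq_of_le (hts hc) hca ▸ hc

end IsCoinitialFor

lemma minimal_mem_iff_forall_update_pred_notMem {ι : Type*} [DecidableEq ι] {π : ι → Type*}
    [∀ i, Preorder (π i)] [∀ i, PredOrder (π i)] {s : Set (∀ i, π i)} (hs : IsUpperSet s)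
    {a : ∀ i, π i} (ha : ∀ i, ¬ IsMin (a i)) :
    Minimal (· ∈ s) a ↔ a ∈ s ∧ ∀ i, Function.update a i (Order.pred (a i)) ∉ s := by
  rw [minimal_iff_forall_lt]
  refine and_congr_right fun _ ↦ ⟨fun h i ↦ h ?_, fun h b hba hb ↦ ?_⟩
  · exact update_lt_self_iff.2 (Order.pred_lt_of_not_isMin (ha i))
  · obtain ⟨hle, i, hi⟩ := Pi.lt_def.1 hba
    have hb_le : b ≤ Function.update a i (Order.pred (a i)) :=
      le_update_iff.2 ⟨Order.le_pred_of_lt hi, fun j _ ↦ hle j⟩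
    exact h i (hs hb_le hb)

section Pinwheel

variable {k : ℕ} {a b : Fin k → ℕ} {F : Set (Fin k → ℕ)}

lemma IsValidSchedule.mono {S : ℕ → Option (Fin k)} (hS : IsValidSchedule a S) (hab : a ≤ b) :
    IsValidSchedule b S := by
  intro i t
  obtain ⟨t', htt', ht', hSt'⟩ := hS i t
  exact ⟨t', htt', ht'.trans_le (Nat.add_le_add_left (hab i) t), hSt'⟩

lemma isUpperSet_setOf_schedulable : IsUpperSet {a : Fin k → ℕ | Schedulable a} :=
  fun _ _ hab ⟨S, hS⟩ ↦ ⟨S, hS.mono hab⟩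

lemma Schedulable.pos (ha : Schedulable a) (i : Fin k) : 0 < a i := by
  obtain ⟨S, hS⟩ := ha
  obtain ⟨t, -, ht, -⟩ := hS i 0
  omega

lemma minimal_schedulable_iff :
    Minimal Schedulable a ↔
      Schedulable a ∧ ∀ i, ¬ Schedulable (Function.update a i (a i - 1)) := by
  by_cases ha : Schedulable a
  · exact minimal_mem_iff_forall_update_pred_notMem isUpperSet_setOf_schedulable
      fun i ↦ not_isMin_of_lt (ha.pos i)
  · exact iff_of_false (fun h ↦ ha h.prop) fun h ↦ ha h.1

lemma minimalSolves_iff_minimal_isCoinitialFor :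
    MinimalSolves F ↔
      Minimal (fun G ↦ G ⊆ {a | Schedulable a} ∧ IsCoinitialFor {a | Schedulable a} G) F :=
  Set.minimal_iff_forall_ssubset.symm

lemma MinimalSolves.mem_iff_minimal_schedulable (hF : MinimalSolves F) :
    a ∈ F ↔ Minimal Schedulable a :=
  mem_iff_minimal_mem_of_minimal_isCoinitialFor (minimalSolves_iff_minimal_isCoinitialFor.1 hF)

end Pinwheel

theorem pareto_surface_characterization_and_unique {k : ℕ}
    (F : Set (Fin k → ℕ)) (hF : MinimalSolves F) :
    (∀ a : Fin k → ℕ,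
      a ∈ F ↔ Schedulable a ∧
        ∀ i : Fin k, ¬ Schedulable (Function.update a i (a i - 1))) ∧
    (∀ F' : Set (Fin k → ℕ), MinimalSolves F' → F' = F) := by
  constructor
  · exact fun a ↦ hF.mem_iff_minimal_schedulable.trans minimal_schedulable_iff
  · exact fun F' hF' ↦ Set.ext fun a ↦
      hF'.mem_iff_minimal_schedulable.trans hF.mem_iff_minimal_schedulable.symm
end

section
/- Let a be a Pinwheel Scheduling instance with ℓ tasks that admits a valid schedule with gap frequency g, and let c ≥ 1. Then the instance with ℓ + c tasks whose frequencies are a 0, …, a (ℓ-1) together with c additional tasks each of frequency c · g is schedulable. -/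
/-- The schedule `S` contains a holiday in every window of `g` consecutive days. -/
def HasGapFrequency {k : ℕ} (S : ℕ → Option (Fin k)) (g : ℕ) : Prop :=
  ∀ t : ℕ, ∃ t', t ≤ t' ∧ t' < t + g ∧ S t' = none

/-!
The holidays are numbered in order, and the `n`-th holiday executes whatever a schedule `T` for
the additional tasks executes on day `n`. A window of `b * g` days contains at least `b` holidays,
numbered consecutively, so a task that `T` repeats within every `b` days is repeated within every
`b * g` days.
For round robin, `T` cycles through the `c` tasks, each repeated within every `c` days.
-/

section Count

variable {p : ℕ → Prop} [DecidablePred p]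

theorem exists_count_eq {s t m : ℕ} (hs : Nat.count p s ≤ m) (ht : m < Nat.count p t) :
    ∃ u, s ≤ u ∧ u < t ∧ p u ∧ Nat.count p u = m := by
  have h_card : ∀ hf : (Set.ofPred p).Finite, m < hf.toFinset.card :=
    fun hf => ht.trans_le (Nat.count_le_card hf t)
  have h_mem : p (Nat.nth p m) := Nat.nth_mem m h_card
  have h_count : Nat.count p (Nat.nth p m) = m := Nat.count_nth h_card
  refine ⟨Nat.nth p m, ?_, Nat.nth_lt_of_lt_count ht, h_mem, h_count⟩
  by_contra! h_lt
  exact hs.not_gt (h_count ▸ Nat.count_strict_mono h_mem h_lt)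

theorem count_add_le_count_add_mul {g : ℕ} (hg : ∀ t, ∃ t', t ≤ t' ∧ t' < t + g ∧ p t')
    (t n : ℕ) : Nat.count p t + n ≤ Nat.count p (t + n * g) := by
  induction n with
  | zero => simp
  | succ n ih =>
    obtain ⟨t', h_le, h_lt, h_mem⟩ := hg (t + n * g)
    calc Nat.count p t + (n + 1)
        ≤ Nat.count p (t + n * g) + 1 := Nat.succ_le_succ ih
      _ ≤ Nat.count p t' + 1 := Nat.succ_le_succ (Nat.count_monotone p h_le)
      _ ≤ Nat.count p (t + n * g + g) := Nat.count_strict_mono h_mem h_lt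
      _ = Nat.count p (t + (n + 1) * g) := by rw [Nat.succ_mul, Nat.add_assoc]

end Count

/-- The cyclic schedule of `c` tasks, without holidays: day `t` executes task `t % c`. -/
def roundRobin (c : ℕ) [NeZero c] (t : ℕ) : Option (Fin c) :=
  some (Fin.ofNat c t)

theorem isValidSchedule_roundRobin (c : ℕ) [NeZero c] :
    IsValidSchedule (fun _ : Fin c => c) (roundRobin c) := by
  intro j t
  have h_residue : (j : ℕ) ∈ (Finset.Ico t (t + c)).image (· % c) := by
    rw [Nat.image_Ico_mod]
    exact Finset.mem_range.2 j.isLt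
  obtain ⟨t', h_window, h_mod⟩ := Finset.mem_image.1 h_residue
  obtain ⟨h_le, h_lt⟩ := Finset.mem_Ico.1 h_window
  exact ⟨t', h_le, h_lt, congrArg some (Fin.ext h_mod)⟩

section FillHolidays

variable {k l : ℕ}

/-- The schedule that follows `S` and uses its holidays, numbered from `0`, as the days of `T`.
Tasks of `S` come first in `Fin (k + l)`, followed by those of `T`. -/
def fillHolidays (S : ℕ → Option (Fin k)) (T : ℕ → Option (Fin l)) (t : ℕ) :
    Option (Fin (k + l)) :=
  match S t with
  | some i => some (Fin.castAdd l i)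
  | none => (T (Nat.count (S · = none) t)).map (Fin.natAdd k)

variable {a : Fin k → ℕ} {b : Fin l → ℕ}
  {S : ℕ → Option (Fin k)} {T : ℕ → Option (Fin l)}

theorem fillHolidays_of_eq_some {t : ℕ} {i : Fin k} (h : S t = some i) :
    fillHolidays S T t = some (Fin.castAdd l i) := by
  simp [fillHolidays, h]

theorem fillHolidays_of_eq_none {t : ℕ} (h : S t = none) :
    fillHolidays S T t = (T (Nat.count (S · = none) t)).map (Fin.natAdd k) := by
  simp [fillHolidays, h]

theorem isValidSchedule_fillHolidays {g : ℕ} (hS : IsValidSchedule a S) (hg : HasGapFrequency S g)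
    (hT : IsValidSchedule b T) :
    IsValidSchedule (Fin.addCases a (fun j => b j * g) : Fin (k + l) → ℕ) (fillHolidays S T) := by
  intro i t
  induction i using Fin.addCases with
  | left i =>
    obtain ⟨t', h_le, h_lt, h_task⟩ := hS i t
    simp only [Fin.addCases_left]
    exact ⟨t', h_le, h_lt, fillHolidays_of_eq_some h_task⟩
  | right j =>
    obtain ⟨m, hm_le, hm_lt, h_task⟩ := hT j (Nat.count (S · = none) t)
    obtain ⟨t', h_le, h_lt, h_holiday, h_count⟩ :=
      exists_count_eq hm_le (hm_lt.trans_le (count_add_le_count_add_mul hg t (b j)))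
    simp only [Fin.addCases_right]
    refine ⟨t', h_le, h_lt, ?_⟩
    rw [fillHolidays_of_eq_none h_holiday, h_count, h_task, Option.map_some]

end FillHolidays

theorem round_robin_fill_general {k l g : ℕ} (a : Fin k → ℕ) {b : Fin l → ℕ} (hb : Schedulable b)
    (h : ∃ S : ℕ → Option (Fin k), IsValidSchedule a S ∧ HasGapFrequency S g) :
    Schedulable (Fin.addCases a (fun j => b j * g) : Fin (k + l) → ℕ) := by
  obtain ⟨S, hS, hg⟩ := h
  obtain ⟨T, hT⟩ := hb
  exact ⟨fillHolidays S T, isValidSchedule_fillHolidays hS hg hT⟩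

theorem round_robin_fill {ℓ c g : ℕ} (a : Fin ℓ → ℕ) (hc : 1 ≤ c)
    (h : ∃ S : ℕ → Option (Fin ℓ), IsValidSchedule a S ∧ HasGapFrequency S g) :
    Schedulable (Fin.addCases a (fun _ : Fin c => c * g) : Fin (ℓ + c) → ℕ) := by
  have : NeZero c := .of_pos hc
  exact round_robin_fill_general a ⟨roundRobin c, isValidSchedule_roundRobin c⟩ h
end

section
/- Let b be a schedulable Pinwheel Scheduling instance with k ≥ 2 tasks and let i be a task. Then the instance with k - 1 tasks obtained from b by deleting task i admits a valid schedule with gap frequency b i. -/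
namespace IsValidSchedule

variable {k m : ℕ} {a : Fin k → ℕ} {S : ℕ → Option (Fin k)} {f : Fin k → Option (Fin m)}

theorem comp_bind {e : Fin m → Fin k} (hS : IsValidSchedule a S)
    (hf : ∀ j, f (e j) = some j) : IsValidSchedule (a ∘ e) fun t => (S t).bind f := by
  intro j t
  obtain ⟨t', ht, ht', hSt'⟩ := hS (e j) t
  exact ⟨t', ht, ht', by simp only [hSt', Option.bind_some, hf]⟩

theorem hasGapFrequency_bind {i : Fin k} (hS : IsValidSchedule a S) (hi : f i = none) :
    HasGapFrequency (fun t => (S t).bind f) (a i) := by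
  intro t
  obtain ⟨t', ht, ht', hSt'⟩ := hS i t
  exact ⟨t', ht, ht', by simp only [hSt', Option.bind_some, hi]⟩

end IsValidSchedule

/-- Deleting a task from a schedulable instance with at least two tasks yields an
instance that is loosely schedulable, with gap frequency the deleted frequency. -/
theorem delete_task_loosely_schedulable {n : ℕ} (hn : 1 ≤ n)
    (b : Fin (n + 1) → ℕ) (hb : Schedulable b) (i : Fin (n + 1)) :
    ∃ S : ℕ → Option (Fin n),
      IsValidSchedule (b ∘ i.succAbove) S ∧ HasGapFrequency S (b i) := by
  obtain ⟨S, hS⟩ := hb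
  -- `finSuccEquiv' i` sends `i` to `none`, so each day spent on task `i` becomes a holiday.
  exact ⟨fun t => (S t).bind (finSuccEquiv' i),
    hS.comp_bind (finSuccEquiv'_succAbove i),
    hS.hasGapFrequency_bind (finSuccEquiv'_at i)⟩
end

section
/- Let a be a schedulable Pinwheel Scheduling instance with k tasks, let i be a task, and let c ≥ 1. Then the c-wise unfolding of a at task i — the instance with k + c - 1 tasks whose frequencies are a j for all j ≠ i together with c tasks each of frequency c · (a i) — is schedulable. -/
/-!
Keep the given schedule, but on the days of task `i` let its `c` copies take turns. Every window of
`c * a i` days contains at least `c` executions of `i`, so each copy has its turn in it.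
-/

/-- The property `p` of days recurs with gaps at most `d`. Validity of a schedule says this, for
each task, of the days on which the task is executed, with `d` its frequency. -/
def MeetsEveryWindow (p : ℕ → Prop) (d : ℕ) : Prop :=
  ∀ t, ∃ t', t ≤ t' ∧ t' < t + d ∧ p t'

namespace MeetsEveryWindow

variable {p q : ℕ → Prop} {d : ℕ}

theorem mono (hp : MeetsEveryWindow p d) (hpq : ∀ t, p t → q t) : MeetsEveryWindow q d := fun t =>
  let ⟨t', ht, htd, hpt⟩ := hp t
  ⟨t', ht, htd, hpq t' hpt⟩

theorem infinite_setOf (hp : MeetsEveryWindow p d) : {t | p t}.Infinite :=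
  Set.infinite_of_forall_exists_gt fun t =>
    let ⟨t', ht, _, hpt⟩ := hp (t + 1)
    ⟨t', hpt, ht⟩

variable [DecidablePred p]

theorem count_lt_count_add (hp : MeetsEveryWindow p d) (t : ℕ) :
    Nat.count p t < Nat.count p (t + d) := by
  obtain ⟨t', ht, htd, hpt⟩ := hp t
  exact (Nat.count_monotone p ht).trans_lt (Nat.count_strict_mono hpt htd)

theorem count_add_le_count_add_mul (hp : MeetsEveryWindow p d) (t m : ℕ) :
    Nat.count p t + m ≤ Nat.count p (t + m * d) := by
  induction m with
  | zero => simp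
  | succ m ih =>
    rw [Nat.succ_mul, ← Nat.add_assoc, ← Nat.add_assoc]
    exact ih.trans_lt (hp.count_lt_count_add _)

theorem count_mod_eq (hp : MeetsEveryWindow p d) {c r : ℕ} (hr : r < c) :
    MeetsEveryWindow (fun t => p t ∧ Nat.count p t % c = r) (c * d) := by
  intro t
  obtain ⟨v, hv, hvr⟩ :
      ∃ v ∈ Finset.Ico (Nat.count p t) (Nat.count p t + c), v % c = r := by
    rwa [← Finset.mem_image, Nat.image_Ico_mod, Finset.mem_range]
  obtain ⟨htv, hvc⟩ := Finset.mem_Ico.mp hv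
  have hinf := hp.infinite_setOf
  refine ⟨Nat.nth p v, (Nat.count_le_iff_le_nth hinf).mp htv, ?_,
    Nat.nth_mem_of_infinite hinf v, ?_⟩
  · exact Nat.nth_lt_of_lt_count (hvc.trans_le (hp.count_add_le_count_add_mul t c))
  · rw [Nat.count_nth_of_infinite hinf, hvr]

end MeetsEveryWindow

section Unfolding

variable {n : ℕ} (c : ℕ) [NeZero c] (i : Fin (n + 1)) (S : ℕ → Option (Fin (n + 1)))

/-- The round-robin unfolding of the schedule `S` at task `i`: the `m`-th execution of `i`
(counting from `0`) is given to copy `m % c` of `i`. As in the unfolded instance, the tasks other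
than `i` come first, renumbered through `i.succAbove`, followed by the `c` copies of `i`. -/
def unfoldSchedule : ℕ → Option (Fin (n + c)) := fun t =>
  (S t).map (i.insertNth (α := fun _ => Fin (n + c))
    (Fin.natAdd n (Fin.ofNat c (Nat.count (S · = some i) t))) (Fin.castAdd c))

variable {i S} {t : ℕ}

theorem unfoldSchedule_of_eq_succAbove {j : Fin n} (ht : S t = some (i.succAbove j)) :
    unfoldSchedule c i S t = some (Fin.castAdd c j) := by
  simp [unfoldSchedule, ht]

theorem unfoldSchedule_of_eq_self (ht : S t = some i) :
    unfoldSchedule c i S t =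
      some (Fin.natAdd n (Fin.ofNat c (Nat.count (S · = some i) t))) := by
  simp [unfoldSchedule, ht]

end Unfolding

/-- Unfolding a schedulable instance at task `i` into `c` copies of frequency
`c * a i` preserves schedulability. -/
theorem unfolding_schedulable {n c : ℕ} (hc : 1 ≤ c)
    (a : Fin (n + 1) → ℕ) (ha : Schedulable a) (i : Fin (n + 1)) :
    Schedulable
      (Fin.addCases (fun j : Fin n => a (i.succAbove j)) (fun _ : Fin c => c * a i) :
        Fin (n + c) → ℕ) := by
  obtain ⟨S, hS⟩ := ha
  have hmeets (k : Fin (n + 1)) : MeetsEveryWindow (S · = some k) (a k) := hS k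
  have : NeZero c := ⟨Nat.one_le_iff_ne_zero.mp hc⟩
  refine ⟨unfoldSchedule c i S, Fin.addCases (fun j => ?other) (fun r => ?copy)⟩
  case other =>
    simp only [Fin.addCases_left]
    exact (hmeets (i.succAbove j)).mono fun t ht => unfoldSchedule_of_eq_succAbove c ht
  case copy =>
    simp only [Fin.addCases_right]
    refine ((hmeets i).count_mod_eq r.isLt).mono fun t ⟨ht, hr⟩ => ?_
    have hcopy : Fin.ofNat c (Nat.count (S · = some i) t) = r := Fin.ext hr
    rw [unfoldSchedule_of_eq_self c ht, hcopy]
end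

section
/- Let a be a Pinwheel Scheduling instance with k tasks, let T be a set of c ≥ 1 tasks, and let f = ⌊(min over i ∈ T of a i) / c⌋. If the folded instance with k - c + 1 tasks, whose frequencies are a j for all j ∉ T together with one task of frequency f, is schedulable, then a is schedulable. -/
/-!
Folding works for any map `π` from tasks to groups: in a schedule of the groups, let the tasks of
each group take turns on the days given to it. If the group has `c` tasks and is served in every
window of `f` days, it is served at least `c` times in every window of `c * f` days. Consecutive
services go to cyclically consecutive tasks, so each task of the group occurs in that window.
-/

/-- The predicate `p` on days holds at least once in every window of `d` consecutive days. This is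
the condition that `IsValidSchedule` imposes on each single task. -/
def RecursWithin (d : ℕ) (p : ℕ → Prop) : Prop :=
  ∀ t : ℕ, ∃ t', t ≤ t' ∧ t' < t + d ∧ p t'

namespace RecursWithin

variable {d d' : ℕ} {p : ℕ → Prop}

lemma mono (hp : RecursWithin d p) (hd : d ≤ d') : RecursWithin d' p := fun t ↦
  let ⟨t', ht, hlt, hpt⟩ := hp t
  ⟨t', ht, by omega, hpt⟩

lemma infinite (hp : RecursWithin d p) : {t | p t}.Infinite :=
  Set.infinite_of_forall_exists_gt fun t ↦
    let ⟨t', ht, _, hpt⟩ := hp (t + 1)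
    ⟨t', hpt, ht⟩

variable [DecidablePred p]

lemma count_lt_count_add (hp : RecursWithin d p) (t : ℕ) :
    Nat.count p t < Nat.count p (t + d) := by
  obtain ⟨t', ht, hlt, hpt⟩ := hp t
  exact (Nat.count_monotone p ht).trans_lt (Nat.count_strict_mono hpt hlt)

lemma count_add_le_count_add_mul (hp : RecursWithin d p) (t c : ℕ) :
    Nat.count p t + c ≤ Nat.count p (t + c * d) := by
  induction c with
  | zero => simp
  | succ c ih =>
    have hlast := hp.count_lt_count_add (t + c * d)
    rw [add_assoc, ← add_one_mul] at hlast
    omega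

lemma and_count_mod_eq (hp : RecursWithin d p) {c r : ℕ} (hr : r < c) :
    RecursWithin (c * d) fun t ↦ p t ∧ Nat.count p t % c = r := by
  intro t
  obtain ⟨n, hn, hnr⟩ : ∃ n ∈ Finset.Ico (Nat.count p t) (Nat.count p t + c), n % c = r := by
    simpa only [← Nat.image_Ico_mod (Nat.count p t), Finset.mem_image] using Finset.mem_range.2 hr
  obtain ⟨hle, hlt⟩ := Finset.mem_Ico.1 hn
  refine ⟨Nat.nth p n, (Nat.count_le_iff_le_nth hp.infinite).1 hle,
    (Nat.lt_nth_iff_count_lt hp.infinite).1 (hlt.trans_le (hp.count_add_le_count_add_mul t c)),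
    Nat.nth_mem_of_infinite hp.infinite n, ?_⟩
  rwa [Nat.count_nth_of_infinite hp.infinite]

end RecursWithin

section TakeTurns

variable {α β : Type*} [Fintype α] [DecidableEq β]

/-- The schedule of the tasks `α` obtained from a schedule `S` of the groups `β`: on the `n`-th day
of a group (counting from `0`), the task in position `n` modulo its size runs, in an arbitrary fixed
enumeration of the group. A day of an empty group becomes a holiday. -/
noncomputable def takeTurns (π : α → β) (S : ℕ → Option β) (t : ℕ) : Option α :=
  (S t).bind fun j ↦
    let group := ({i | π i = j} : Finset α).toList
    group[Nat.count (S · = some j) t % group.length]?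

lemma recursWithin_takeTurns (π : α → β) {S : ℕ → Option β} {d : ℕ} {i : α}
    (hS : RecursWithin d (S · = some (π i))) :
    RecursWithin (({i' | π i' = π i} : Finset α).card * d) (takeTurns π S · = some i) := by
  obtain ⟨r, hr, hri⟩ : ∃ r, ∃ hr : r < ({i' | π i' = π i} : Finset α).toList.length,
      ({i' | π i' = π i} : Finset α).toList[r] = i :=
    List.mem_iff_getElem.1 (by simp)
  intro t
  rw [← Finset.length_toList]
  obtain ⟨t', ht, hlt, hSt, hcount⟩ := hS.and_count_mod_eq hr t
  refine ⟨t', ht, hlt, ?_⟩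
  simp only [takeTurns, hSt, Option.bind_some, hcount, List.getElem?_eq_getElem hr, hri]

end TakeTurns

theorem folding_schedulable_general {k l : ℕ} {a : Fin k → ℕ} {b : Fin l → ℕ} (π : Fin k → Fin l)
    (hab : ∀ i, ({i' | π i' = π i} : Finset (Fin k)).card * b (π i) ≤ a i)
    (hb : Schedulable b) : Schedulable a := by
  obtain ⟨S, hS⟩ := hb
  exact ⟨takeTurns π S, fun i ↦ (recursWithin_takeTurns π (hS (π i))).mono (hab i)⟩

section FoldGroup

variable {α : Type*} [DecidableEq α]

/-- The grouping that underlies the folding of `T`: all tasks of `T` form the single group `none`,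
and every other task is a group of its own. -/
def foldGroup (T : Finset α) (i : α) : Option {j : α // j ∉ T} :=
  if hi : i ∈ T then none else some ⟨i, hi⟩

variable {T : Finset α} {i : α}

lemma foldGroup_eq_none_iff : foldGroup T i = none ↔ i ∈ T := by
  simp [foldGroup]

lemma foldGroup_eq_some_iff {x : {j : α // j ∉ T}} : foldGroup T i = some x ↔ i = x := by
  have := x.2
  grind [foldGroup]

lemma card_fiber_foldGroup_mul_le [Fintype α] {a : α → ℕ} {f : ℕ} (hf : ∀ i ∈ T, T.card * f ≤ a i)
    (i : α) :
    ({i' | foldGroup T i' = foldGroup T i} : Finset α).card *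
      (foldGroup T i).elim f (fun j ↦ a j.1) ≤ a i := by
  by_cases hi : i ∈ T
  · simpa [foldGroup_eq_none_iff.2 hi, foldGroup_eq_none_iff] using hf i hi
  · simp [foldGroup_eq_some_iff (x := ⟨i, hi⟩).2 rfl, foldGroup_eq_some_iff, Finset.filter_eq']

end FoldGroup

/-- Folding: if the instance obtained from `a` by replacing the `c` tasks of `T` with a
single task of frequency `⌊(min over T of a) / c⌋` is schedulable, so is `a`. -/
theorem folding_schedulable {k c : ℕ} (a : Fin k → ℕ) (T : Finset (Fin k))
    (hc : 1 ≤ c) (hT : T.card = c)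
    (f : ℕ) (hf : f = T.inf' (Finset.card_pos.mp (by omega)) a / c)
    (b : Fin (k - c + 1) → ℕ)
    (e : Fin (k - c + 1) ≃ Option {j : Fin k // j ∉ T})
    (hb : ∀ i, b i = (e i).elim f (fun j => a j.1))
    (hsched : Schedulable b) :
    Schedulable a := by
  have hf' : ∀ i ∈ T, T.card * f ≤ a i := fun i hi ↦ by
    rw [hT, hf]
    exact (Nat.mul_div_le _ c).trans (Finset.inf'_le a hi)
  refine folding_schedulable_general (e.symm ∘ foldGroup T) (fun i ↦ ?_) hsched
  simpa [hb] using card_fiber_foldGroup_mul_le hf' i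
end
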